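/- arXiv:1406.4381 — 4 statements merged into one kernel-verified Lean document; each statement's English description precedes it below -/
import Mathlib

section
/- Let η > 0. Let ρ, j : ℝ × ℝ → ℝ be continuously differentiable, 1-periodic in their second argument, and satisfy the continuity equation ∂ρ/∂t + ∂j/∂x = 0 at every point. Let A, B, 𝓔 : ℝ × ℝ → ℝ be continuously differentiable, 1-periodic in their second argument, and satisfy ∂A/∂t = −𝓔, B = ∂A/∂x, ∂B/∂t = −∂𝓔/∂x and ∂𝓔/∂t = η⁻²·A·ρ − ∂B/∂x at every point. Then the transverse energy WT(t) := (1/2)·∫₀¹ A(t,x)²·ρ(t,x) dx + (η²/2)·∫₀¹ [𝓔(t,x)² + B(t,x)²] dx satisfies d/dt WT(t) = ∫₀¹ A(t,x)·B(t,x)·j(t,x) dx for all t. -/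
open MeasureTheory

/-!
The energy density `w = A²ρ/2 + η²(E² + B²)/2` and the flux `f = A²j/2 + η²EB` satisfy the local
balance law `∂ₜw + ∂ₓf = ABj`: the source `η⁻²Aρ` in the equation for `E` cancels the work term
`-AEρ` coming from `∂ₜA = -E`, and the continuity equation turns `A²∂ₜρ/2` into `-A²∂ₓj/2`.
Integrating over an interval leaves `∫ ABj` minus the difference of the flux at the endpoints, which
vanishes over a period.
-/

section BalanceLaw

variable {G : Type*} [NormedAddCommGroup G] [NormedSpace ℝ G]

theorem hasDerivAt_intervalIntegral_of_continuous {𝕜 : Type*} [RCLike 𝕜] [NormedSpace 𝕜 G]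
    {μ : Measure ℝ} [IsLocallyFiniteMeasure μ] {F F' : 𝕜 → ℝ → G}
    (hF : ∀ s, Continuous (F s)) (hF' : Continuous (Function.uncurry F'))
    (hderiv : ∀ s x, HasDerivAt (fun r => F r x) (F' s x) s) (a b : ℝ) (t : 𝕜) :
    HasDerivAt (fun s => ∫ x in a..b, F s x ∂μ) (∫ x in a..b, F' t x ∂μ) t := by
  obtain ⟨C, hC⟩ := ((isCompact_closedBall t 1).prod
    (isCompact_uIcc (a := a) (b := b))).exists_bound_of_continuousOn hF'.continuousOn
  have hbound : ∀ x ∈ Set.uIoc a b, ∀ s ∈ Metric.closedBall t 1, ‖F' s x‖ ≤ C :=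
    fun x hx s hs => hC (s, x) ⟨hs, Set.uIoc_subset_uIcc hx⟩
  exact (intervalIntegral.hasDerivAt_integral_of_dominated_loc_of_deriv_le
    (Metric.closedBall_mem_nhds t one_pos)
    (.of_forall fun s => (hF s).aestronglyMeasurable)
    ((hF t).intervalIntegrable a b)
    (hF'.comp (.prodMk_right t)).aestronglyMeasurable
    (.of_forall hbound)
    intervalIntegrable_const
    (.of_forall fun x _ s _ => hderiv s x)).2

theorem continuous_deriv_fst_of_contDiff {w : ℝ × ℝ → G} (hw : ContDiff ℝ 1 w) :
    Continuous fun p : ℝ × ℝ => deriv (fun s => w (s, p.2)) p.1 := by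
  have hslice (p : ℝ × ℝ) : deriv (fun s => w (s, p.2)) p.1 = fderiv ℝ w p (1, 0) :=
    ((hw.differentiable one_ne_zero p).hasFDerivAt.comp_hasDerivAt p.1
      ((hasDerivAt_id p.1).prodMk (hasDerivAt_const p.1 p.2))).deriv
  simp_rw [hslice]
  exact (hw.continuous_fderiv one_ne_zero).clm_apply continuous_const

theorem hasDerivAt_intervalIntegral_of_balance [CompleteSpace G] {w : ℝ × ℝ → G} {f g : ℝ → G}
    {t : ℝ} (hw : ContDiff ℝ 1 w) (hf : Differentiable ℝ f) (hg : Continuous g)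
    (hbalance : ∀ x, deriv (fun s => w (s, x)) t + deriv f x = g x) (a b : ℝ) :
    HasDerivAt (fun s => ∫ x in a..b, w (s, x)) ((∫ x in a..b, g x) - (f b - f a)) t := by
  have hw' : Continuous fun p : ℝ × ℝ => deriv (fun s => w (s, p.2)) p.1 :=
    continuous_deriv_fst_of_contDiff hw
  have hf' : deriv f = fun x => g x - deriv (fun s => w (s, x)) t :=
    funext fun x => eq_sub_of_add_eq' (hbalance x)
  have hf'_cont : Continuous (deriv f) := hf' ▸ hg.sub (hw'.comp (.prodMk_right t))
  have hflux : ∫ x in a..b, deriv f x = f b - f a :=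
    intervalIntegral.integral_deriv_eq_sub (fun x _ => hf x) (hf'_cont.intervalIntegrable a b)
  have hw_deriv (s x : ℝ) :
      HasDerivAt (fun r => w (r, x)) (deriv (fun r => w (r, x)) s) s := by
    have hslice : Differentiable ℝ fun r => w (r, x) := by
      have := hw.differentiable one_ne_zero
      fun_prop
    exact (hslice s).hasDerivAt
  have hint : ∫ x in a..b, deriv (fun s => w (s, x)) t = (∫ x in a..b, g x) - (f b - f a) := by
    rw [← hflux, ← intervalIntegral.integral_sub (hg.intervalIntegrable a b)
      (hf'_cont.intervalIntegrable a b)]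
    simp only [← hbalance, add_sub_cancel_right]
  rw [← hint]
  exact hasDerivAt_intervalIntegral_of_continuous
    (F' := fun s x => deriv (fun r => w (r, x)) s)
    (fun s => hw.continuous.comp (.prodMk_right s)) hw' hw_deriv a b t

end BalanceLaw

section TransverseEnergy

/-- The density of the transverse energy `WTK + WTP`, at a point of space-time. -/
noncomputable def transverseEnergyDensity (η : ℝ) (ρ A B E : ℝ × ℝ → ℝ) (p : ℝ × ℝ) : ℝ :=
  (1 / 2) * (A p ^ 2 * ρ p) + (η ^ 2 / 2) * (E p ^ 2 + B p ^ 2)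

/-- The flux of the transverse energy: the kinetic part `A²/2` carried by the current `j`, plus the
Poynting flux `η²EB` of the transverse field. -/
noncomputable def transverseEnergyFlux (η : ℝ) (j A B E : ℝ × ℝ → ℝ) (p : ℝ × ℝ) : ℝ :=
  (1 / 2) * (A p ^ 2 * j p) + η ^ 2 * (E p * B p)

variable {η : ℝ} {ρ j A B E : ℝ × ℝ → ℝ}

theorem deriv_transverseEnergyDensity_add_deriv_transverseEnergyFlux {t x : ℝ} (hη : η ≠ 0)
    (hρ : DifferentiableAt ℝ ρ (t, x)) (hj : DifferentiableAt ℝ j (t, x))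
    (hA : DifferentiableAt ℝ A (t, x)) (hB : DifferentiableAt ℝ B (t, x))
    (hE : DifferentiableAt ℝ E (t, x))
    (hcont : deriv (fun s => ρ (s, x)) t + deriv (fun y => j (t, y)) x = 0)
    (hAt : deriv (fun s => A (s, x)) t = -E (t, x))
    (hAx : B (t, x) = deriv (fun y => A (t, y)) x)
    (hBt : deriv (fun s => B (s, x)) t = -deriv (fun y => E (t, y)) x)
    (hEt : deriv (fun s => E (s, x)) t =
      η⁻¹ ^ 2 * A (t, x) * ρ (t, x) - deriv (fun y => B (t, y)) x) :
    deriv (fun s => transverseEnergyDensity η ρ A B E (s, x)) t +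
      deriv (fun y => transverseEnergyFlux η j A B E (t, y)) x =
        A (t, x) * B (t, x) * j (t, x) := by
  have dt {F : ℝ × ℝ → ℝ} (hF : DifferentiableAt ℝ F (t, x)) :
      HasDerivAt (fun s => F (s, x)) (deriv (fun s => F (s, x)) t) t :=
    DifferentiableAt.hasDerivAt (by fun_prop)
  have dx {F : ℝ × ℝ → ℝ} (hF : DifferentiableAt ℝ F (t, x)) :
      HasDerivAt (fun y => F (t, y)) (deriv (fun y => F (t, y)) x) x :=
    DifferentiableAt.hasDerivAt (by fun_prop)
  have hdensity := ((((dt hA).fun_pow 2).fun_mul (dt hρ)).const_mul (1 / 2 : ℝ)).fun_add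
    ((((dt hE).fun_pow 2).fun_add ((dt hB).fun_pow 2)).const_mul (η ^ 2 / 2))
  have hflux := ((((dx hA).fun_pow 2).fun_mul (dx hj)).const_mul (1 / 2 : ℝ)).fun_add
    (((dx hE).fun_mul (dx hB)).const_mul (η ^ 2))
  have hρt : deriv (fun s => ρ (s, x)) t = -deriv (fun y => j (t, y)) x :=
    eq_neg_of_add_eq_zero_left hcont
  simp only [transverseEnergyDensity, transverseEnergyFlux]
  rw [hdensity.deriv, hflux.deriv, hAt, hBt, hEt, hρt, ← hAx]
  field_simp
  ring

theorem intervalIntegral_transverseEnergyDensity (hρ : Continuous ρ) (hA : Continuous A)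
    (hB : Continuous B) (hE : Continuous E) (s a b : ℝ) :
    ∫ x in a..b, transverseEnergyDensity η ρ A B E (s, x) =
      (1 / 2) * (∫ x in a..b, A (s, x) ^ 2 * ρ (s, x)) +
        (η ^ 2 / 2) * ∫ x in a..b, (E (s, x) ^ 2 + B (s, x) ^ 2) := by
  simp only [transverseEnergyDensity]
  rw [intervalIntegral.integral_add (Continuous.intervalIntegrable (by fun_prop) a b)
      (Continuous.intervalIntegrable (by fun_prop) a b),
    intervalIntegral.integral_const_mul, intervalIntegral.integral_const_mul]

theorem periodic_transverseEnergyFlux {t c : ℝ} (hj : (fun x => j (t, x)).Periodic c)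
    (hA : (fun x => A (t, x)).Periodic c) (hB : (fun x => B (t, x)).Periodic c)
    (hE : (fun x => E (t, x)).Periodic c) :
    (fun x => transverseEnergyFlux η j A B E (t, x)).Periodic c := fun x => by
  simp only [transverseEnergyFlux, hj x, hA x, hB x, hE x]

theorem transverse_energy_evolution_general {t : ℝ} (hη : η ≠ 0)
    (hρ : ContDiff ℝ 1 ρ) (hj : Differentiable ℝ j)
    (hA : ContDiff ℝ 1 A) (hB : ContDiff ℝ 1 B) (hE : ContDiff ℝ 1 E)
    (hcont : ∀ x, deriv (fun s => ρ (s, x)) t + deriv (fun y => j (t, y)) x = 0)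
    (hAt : ∀ x, deriv (fun s => A (s, x)) t = -E (t, x))
    (hAx : ∀ x, B (t, x) = deriv (fun y => A (t, y)) x)
    (hBt : ∀ x, deriv (fun s => B (s, x)) t = -deriv (fun y => E (t, y)) x)
    (hEt : ∀ x, deriv (fun s => E (s, x)) t =
      η⁻¹ ^ 2 * A (t, x) * ρ (t, x) - deriv (fun y => B (t, y)) x) (a b : ℝ) :
    HasDerivAt (fun s =>
        (1 / 2) * (∫ x in a..b, A (s, x) ^ 2 * ρ (s, x))
          + (η ^ 2 / 2) * ∫ x in a..b, (E (s, x) ^ 2 + B (s, x) ^ 2))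
      ((∫ x in a..b, A (t, x) * B (t, x) * j (t, x)) -
        (transverseEnergyFlux η j A B E (t, b) - transverseEnergyFlux η j A B E (t, a))) t := by
  have hdA := hA.differentiable one_ne_zero
  have hdB := hB.differentiable one_ne_zero
  have hdE := hE.differentiable one_ne_zero
  have hdensity : ContDiff ℝ 1 (transverseEnergyDensity η ρ A B E) := by
    unfold transverseEnergyDensity
    fun_prop
  have hflux : Differentiable ℝ fun x => transverseEnergyFlux η j A B E (t, x) := by
    unfold transverseEnergyFlux
    fun_prop
  have hsource : Continuous fun x => A (t, x) * B (t, x) * j (t, x) := by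
    have := hj.continuous
    fun_prop
  have hbalance (x : ℝ) := deriv_transverseEnergyDensity_add_deriv_transverseEnergyFlux hη
    (hρ.differentiable one_ne_zero _) (hj _) (hdA _) (hdB _) (hdE _)
    (hcont x) (hAt x) (hAx x) (hBt x) (hEt x)
  have henergy (s : ℝ) := intervalIntegral_transverseEnergyDensity (η := η)
    hρ.continuous hA.continuous hB.continuous hE.continuous s a b
  simpa only [henergy] using
    hasDerivAt_intervalIntegral_of_balance hdensity hflux hsource hbalance a b

end TransverseEnergy

/-- Evolution of the transverse energy: under the Maxwell equations and the
continuity equation, `d/dt WT(t) = ∫₀¹ A·B·j dx`. -/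
theorem transverse_energy_evolution
    (η : ℝ) (hη : 0 < η)
    (ρ j : ℝ × ℝ → ℝ) (hρ : ContDiff ℝ 1 ρ) (hj : ContDiff ℝ 1 j)
    (hρper : ∀ t x : ℝ, ρ (t, x + 1) = ρ (t, x))
    (hjper : ∀ t x : ℝ, j (t, x + 1) = j (t, x))
    (hcont : ∀ t x : ℝ,
      deriv (fun s => ρ (s, x)) t + deriv (fun y => j (t, y)) x = 0)
    (A B E : ℝ × ℝ → ℝ)
    (hA : ContDiff ℝ 1 A) (hB : ContDiff ℝ 1 B) (hE : ContDiff ℝ 1 E)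
    (hAper : ∀ t x : ℝ, A (t, x + 1) = A (t, x))
    (hBper : ∀ t x : ℝ, B (t, x + 1) = B (t, x))
    (hEper : ∀ t x : ℝ, E (t, x + 1) = E (t, x))
    (hAt : ∀ t x : ℝ, deriv (fun s => A (s, x)) t = -E (t, x))
    (hBdef : ∀ t x : ℝ, B (t, x) = deriv (fun y => A (t, y)) x)
    (hBt : ∀ t x : ℝ,
      deriv (fun s => B (s, x)) t = -deriv (fun y => E (t, y)) x)
    (hEt : ∀ t x : ℝ,
      deriv (fun s => E (s, x)) t =
        η⁻¹ ^ 2 * A (t, x) * ρ (t, x) - deriv (fun y => B (t, y)) x) :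
    ∀ t : ℝ,
      HasDerivAt (fun s =>
          (1 / 2) * (∫ x in (0:ℝ)..1, A (s, x) ^ 2 * ρ (s, x))
            + (η ^ 2 / 2) * ∫ x in (0:ℝ)..1, (E (s, x) ^ 2 + B (s, x) ^ 2))
        (∫ x in (0:ℝ)..1, A (t, x) * B (t, x) * j (t, x)) t := by
  intro t
  simpa only [(periodic_transverseEnergyFlux (hjper t) (hAper t) (hBper t) (hEper t)).eq, sub_self,
    sub_zero] using transverse_energy_evolution_general hη.ne' hρ
    (hj.differentiable one_ne_zero) hA hB hE (hcont t) (hAt t) (hBdef t) (hBt t) (hEt t) 0 1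
end

section
/- Let h > 0, y₀ ∈ ℝ, and set equispaced nodes y_m = y₀ + m·h for m = 0, 1, …, 5. Let u₀, …, u₅ ∈ ℝ be arbitrary values. Let P be the unique polynomial of degree ≤ 5 with P(y_m) = u_m for m = 0, …, 5, and let Q₀, Q₁, Q₂ be the unique polynomials of degree ≤ 3 interpolating the same values on the substencils {y₂, y₃, y₄, y₅}, {y₁, y₂, y₃, y₄} and {y₀, y₁, y₂, y₃} respectively. Then for all x ∈ ℝ: P(x) = [(x − y₀)(x − y₁)/(20h²)]·Q₀(x) − [(x − y₀)(x − y₅)/(10h²)]·Q₁(x) + [(x − y₅)(x − y₄)/(20h²)]·Q₂(x). -/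
open Polynomial

/-!
A family of weights `W i` summing to `1` combines polynomials `Q i` into the interpolant `P` as
soon as, at every node, each weight `W i` vanishes or `Q i` has the right value: both sides then
agree at all nodes, and the degrees are small enough for this to determine them.

For the substencils `{i, …, i + m}` of the equispaced stencil `{0, …, n + m}`, the weight of index
`i` must therefore be a multiple of `∏ k < i, (X - y k) * ∏ k > i + m, (X - y k)`, which has
degree `n`. Up to powers of `h` and signs, these two products are falling factorials of `X - y 0`
and `y (n + m) - X`, whose sum is the constant `(n + m) * h`. The Chu–Vandermonde identity thus
says that they sum to a constant when taken with binomial coefficients, and it gives the constant: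
`(n + m)! / m!`, which is `20` for `(n, m) = (2, 3)`.
-/

section PartitionOfUnity

variable {R ι κ : Type*} [CommRing R] [IsDomain R]

theorem eq_sum_weight_mul_of_sum_weight_eq_one {s : Finset κ} {v : κ → R} (hv : Set.InjOn v s)
    {t : Finset ι} {W Q : ι → R[X]} {P : R[X]} (hP : P.degree < s.card)
    (hdeg : ∀ i ∈ t, (W i * Q i).degree < s.card) (hW : ∑ i ∈ t, W i = 1)
    (heval : ∀ i ∈ t, ∀ k ∈ s, (W i).eval (v k) = 0 ∨ (Q i).eval (v k) = P.eval (v k)) :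
    P = ∑ i ∈ t, W i * Q i := by
  have hdeg_sum : (∑ i ∈ t, W i * Q i).degree < s.card := by
    rw [← mem_degreeLT]
    exact Submodule.sum_mem _ fun i hi ↦ mem_degreeLT.mpr (hdeg i hi)
  refine eq_of_degrees_lt_of_eval_index_eq s hv hP hdeg_sum fun k hk ↦ ?_
  calc P.eval (v k) = (∑ i ∈ t, W i).eval (v k) * P.eval (v k) := by rw [hW, eval_one, one_mul]
    _ = ∑ i ∈ t, (W i).eval (v k) * P.eval (v k) := by rw [eval_finsetSum, Finset.sum_mul]
    _ = ∑ i ∈ t, (W i).eval (v k) * (Q i).eval (v k) := by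
        refine Finset.sum_congr rfl fun i hi ↦ ?_
        rcases heval i hi k hk with hzero | hagree
        · rw [hzero, zero_mul, zero_mul]
        · rw [hagree]
    _ = (∑ i ∈ t, W i * Q i).eval (v k) := by simp only [eval_finsetSum, eval_mul]

end PartitionOfUnity

section Equispaced

open Finset Lagrange
open scoped Nat

section CommRing

variable {R : Type*} [CommRing R]

/-- Chu–Vandermonde with step `h`; the step `h = 0` gives the binomial theorem. -/
theorem prod_range_add_sub_mul (r s h : R) (n : ℕ) :
    ∏ a ∈ range n, (r + s - a * h) =
      ∑ p ∈ antidiagonal n, n.choose p.1 *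
        ((∏ a ∈ range p.1, (r - a * h)) * ∏ b ∈ range p.2, (s - b * h)) := by
  induction n with
  | zero => simp
  | succ n ih =>
    rw [prod_range_succ, ih, sum_mul,
      sum_antidiagonal_choose_succ_mul fun i j ↦
        (∏ a ∈ range i, (r - a * h)) * ∏ b ∈ range j, (s - b * h),
      ← sum_add_distrib]
    refine sum_congr rfl fun p hp ↦ ?_
    have hn : (n : R) = p.1 + p.2 := by rw [← mem_antidiagonal.mp hp, Nat.cast_add]
    have hchoose : n.choose p.2 = n.choose p.1 :=
      (Nat.choose_symm_of_eq_add (mem_antidiagonal.mp hp).symm).symm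
    rw [prod_range_succ, prod_range_succ, hchoose, hn]
    ring

theorem prod_range_natCast_mul_sub_mul (h : R) (n m : ℕ) :
    ∏ a ∈ range n, (((n + m : ℕ) : R) * h - a * h) = (n + m).descFactorial n * h ^ n := by
  have hcard : h ^ n = h ^ (range n).card := by rw [card_range]
  rw [Nat.descFactorial_eq_prod_range, Nat.cast_prod, hcard, prod_mul_pow_card]
  refine prod_congr rfl fun a ha ↦ ?_
  rw [Nat.cast_sub ((mem_range.mp ha).le.trans (Nat.le_add_right n m)), sub_mul]

theorem natCast_injOn_range_of_factorial_ne_zero {N : ℕ} (hN : (N ! : R) ≠ 0) :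
    Set.InjOn (Nat.cast : ℕ → R) (range (N + 1)) := by
  intro a ha b hb hab
  wlog hle : a ≤ b generalizing a b
  · exact (this hb ha hab.symm (le_of_not_ge hle)).symm
  by_contra hne
  have hdvd : b - a ∣ N ! := by
    rw [coe_range, Set.mem_Iio] at hb
    exact Nat.dvd_factorial (by lia) (by lia)
  have hzero : ((b - a : ℕ) : R) = 0 := by rw [Nat.cast_sub hle, hab, sub_self]
  exact hN (zero_dvd_iff.mp (hzero ▸ Nat.cast_dvd_cast hdvd))

variable {y₀ h : R} {y : ℕ → R}

theorem injOn_range_of_equispaced [IsDomain R] (hy : ∀ k : ℕ, y k = y₀ + k * h) (hh : h ≠ 0)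
    {N : ℕ} (hN : (N ! : R) ≠ 0) : Set.InjOn y (range (N + 1)) := by
  intro a ha b hb hab
  rw [hy, hy] at hab
  exact natCast_injOn_range_of_factorial_ne_zero hN ha hb
    (mul_right_cancel₀ hh (add_left_cancel hab))

theorem nodal_range_of_equispaced (hy : ∀ k : ℕ, y k = y₀ + k * h) (i : ℕ) :
    nodal (range i) y = ∏ a ∈ range i, (X - C y₀ - (a : R[X]) * C h) := by
  refine prod_congr rfl fun a _ ↦ ?_
  simp only [hy, C_add, C_mul, C_eq_natCast, sub_sub]

theorem nodal_Ico_of_equispaced (hy : ∀ k : ℕ, y k = y₀ + k * h) (a j : ℕ) :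
    nodal (Ico (a + 1) (a + 1 + j)) y =
      (-1) ^ j * ∏ b ∈ range j, (C (y (a + j)) - X - (b : R[X]) * C h) := by
  have hcard : (-1 : R[X]) ^ j = (-1) ^ (range j).card := by rw [card_range]
  rw [nodal_eq, prod_Ico_eq_prod_range, Nat.add_sub_cancel_left, ← prod_range_reflect, hcard,
    pow_card_mul_prod]
  refine prod_congr rfl fun b hb ↦ ?_
  have hindex : a + j = a + 1 + (j - 1 - b) + b := by
    have := mem_range.mp hb
    lia
  simp only [hy, hindex, Nat.cast_add _ b, C_add, C_mul, C_eq_natCast]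
  ring

end CommRing

variable {K : Type*} [Field K] {y₀ h : K} {y : ℕ → K}

/-- The FBMWENO weight of the substencil `{i, …, i + m}`, which omits the first `i` and the last
`j` nodes of the stencil `{0, …, i + m + j}` with spacing `h`. The paper's parameters are
`r_tot = i + j + m` and `r_sub = m`, so that the descending factorial is `r_tot! / r_sub!`; its
`C₀, C₁, C₂` are the cases `(i, j) = (2, 0)`, `(1, 1)`, `(0, 2)`. -/
noncomputable def substencilWeight (y : ℕ → K) (h : K) (m i j : ℕ) : K[X] :=
  C ((-1) ^ j * (i + j).choose i / ((i + j + m).descFactorial (i + j) * h ^ (i + j))) *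
    (nodal (range i) y * nodal (Ico (i + m + 1) (i + m + 1 + j)) y)

theorem degree_substencilWeight_le (y : ℕ → K) (h : K) (m i j : ℕ) :
    (substencilWeight y h m i j).degree ≤ (i + j : ℕ) := by
  rw [substencilWeight, ← smul_eq_C_mul]
  refine (degree_smul_le _ _).trans ?_
  rw [degree_mul, degree_nodal, degree_nodal, card_range, Nat.card_Ico, Nat.add_sub_cancel_left,
    Nat.cast_add]

theorem eval_substencilWeight (y : ℕ → K) (h : K) (m i j : ℕ) (x : K) :
    (substencilWeight y h m i j).eval x =
      (-1) ^ j * (i + j).choose i / ((i + j + m).descFactorial (i + j) * h ^ (i + j)) *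
        ((∏ a ∈ range i, (x - y a)) * ∏ b ∈ range j, (x - y (i + m + 1 + b))) := by
  rw [substencilWeight, eval_mul, eval_C, eval_mul, eval_nodal, eval_nodal, prod_Ico_eq_prod_range,
    Nat.add_sub_cancel_left]

theorem eval_substencilWeight_eq_zero (h : K) {m i j k : ℕ} (hk : k ≤ i + j + m)
    (hout : k ∉ Icc i (i + m)) : (substencilWeight y h m i j).eval (y k) = 0 := by
  rw [substencilWeight, eval_mul, eval_mul]
  by_cases hleft : k < i
  · rw [eval_nodal_at_node (mem_range.mpr hleft), zero_mul, mul_zero]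
  · have hright : k ∈ Ico (i + m + 1) (i + m + 1 + j) := by
      rw [mem_Icc] at hout
      exact mem_Ico.mpr (by lia)
    rw [eval_nodal_at_node hright, mul_zero, mul_zero]

theorem substencilWeight_of_equispaced (hy : ∀ k : ℕ, y k = y₀ + k * h) {n m i j : ℕ}
    (hij : i + j = n) :
    substencilWeight y h m i j =
      C (((n + m).descFactorial n * h ^ n)⁻¹) * (n.choose i *
        ((∏ a ∈ range i, (X - C y₀ - (a : K[X]) * C h)) *
          ∏ b ∈ range j, (C (y (n + m)) - X - (b : K[X]) * C h))) := by
  have hsign : ((-1) ^ j * (-1) ^ j : K[X]) = 1 := by rw [← mul_pow, neg_one_mul, neg_neg, one_pow]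
  subst hij
  rw [substencilWeight, nodal_range_of_equispaced hy, nodal_Ico_of_equispaced hy,
    add_right_comm i m j, div_eq_mul_inv]
  simp only [C_mul, C_pow, C_neg, C_1, C_eq_natCast]
  conv_rhs => rw [← one_mul (C _ * _), ← hsign]
  ring

theorem sum_substencilWeight (hy : ∀ k : ℕ, y k = y₀ + k * h) (hh : h ≠ 0) {n m : ℕ}
    (hfac : ((n + m)! : K) ≠ 0) :
    ∑ p ∈ antidiagonal n, substencilWeight y h m p.1 p.2 = 1 := by
  have hdesc : ((n + m).descFactorial n : K) ≠ 0 := by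
    rw [← Nat.factorial_mul_descFactorial (Nat.le_add_right n m), Nat.cast_mul] at hfac
    exact right_ne_zero_of_mul hfac
  have hsum : (X - C y₀) + (C (y (n + m)) - X) = ((n + m : ℕ) : K[X]) * C h := by
    rw [hy, C_add, C_mul, C_eq_natCast]
    ring
  have hconst : ((n + m).descFactorial n * C h ^ n : K[X]) =
      C ((n + m).descFactorial n * h ^ n) := by
    rw [C_mul, C_pow, C_eq_natCast]
  rw [sum_congr rfl fun p hp ↦ substencilWeight_of_equispaced hy (mem_antidiagonal.mp hp),
    ← mul_sum, ← prod_range_add_sub_mul, hsum, prod_range_natCast_mul_sub_mul, hconst, ← C_mul,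
    inv_mul_cancel₀ (mul_ne_zero hdesc (pow_ne_zero n hh)), C_1]

theorem fbmweno_optimal_polynomial_weights_general (hy : ∀ k : ℕ, y k = y₀ + k * h) (hh : h ≠ 0)
    {n m : ℕ} (hfac : ((n + m)! : K) ≠ 0) {u : ℕ → K} {P : K[X]} (hPdeg : P.degree ≤ (n + m : ℕ))
    (hP : ∀ k ≤ n + m, P.eval (y k) = u k) {Q : ℕ → K[X]} (hQdeg : ∀ i ≤ n, (Q i).degree ≤ m)
    (hQ : ∀ i ≤ n, ∀ k ∈ Icc i (i + m), (Q i).eval (y k) = u k) :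
    P = ∑ p ∈ antidiagonal n, substencilWeight y h m p.1 p.2 * Q p.1 := by
  have hlt : ((n + m : ℕ) : WithBot ℕ) < (range (n + m + 1)).card := by
    rw [card_range]
    exact_mod_cast Nat.lt_succ_self (n + m)
  refine eq_sum_weight_mul_of_sum_weight_eq_one (injOn_range_of_equispaced hy hh hfac)
    (hPdeg.trans_lt hlt) (fun p hp ↦ ?_) (sum_substencilWeight hy hh hfac) fun p hp k hk ↦ ?_
  · refine lt_of_le_of_lt ?_ hlt
    rw [Nat.cast_add, ← mem_antidiagonal.mp hp]
    exact degree_mul_le_of_le (degree_substencilWeight_le y h m p.1 p.2)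
      (hQdeg p.1 (HasAntidiagonal.antidiagonal.fst_le hp))
  · have hk_le : k ≤ n + m := Nat.lt_succ_iff.mp (mem_range.mp hk)
    by_cases hin : k ∈ Icc p.1 (p.1 + m)
    · exact .inr ((hQ p.1 (HasAntidiagonal.antidiagonal.fst_le hp) k hin).trans (hP k hk_le).symm)
    · exact .inl (eval_substencilWeight_eq_zero h (by rwa [mem_antidiagonal.mp hp]) hin)

end Equispaced

/-- FBMWENO with `(r_tot, r_sub) = (5, 3)`: the degree-5 interpolant on the big
stencil of 6 equispaced nodes is the combination of the three degree-3
interpolants on the four-point substencils with the polynomial coefficients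
`C₀, C₁, C₂`. -/
theorem fbmweno_optimal_polynomial_weights
    (h : ℝ) (hh : 0 < h) (y₀ : ℝ)
    (y : ℕ → ℝ) (hy : ∀ m : ℕ, y m = y₀ + (m : ℝ) * h)
    (u : ℕ → ℝ)
    (P : Polynomial ℝ) (hPdeg : P.degree ≤ 5)
    (hP : ∀ m : ℕ, m ≤ 5 → P.eval (y m) = u m)
    (Q₀ Q₁ Q₂ : Polynomial ℝ)
    (hQ₀deg : Q₀.degree ≤ 3) (hQ₁deg : Q₁.degree ≤ 3) (hQ₂deg : Q₂.degree ≤ 3)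
    (hQ₀ : ∀ m : ℕ, 2 ≤ m → m ≤ 5 → Q₀.eval (y m) = u m)
    (hQ₁ : ∀ m : ℕ, 1 ≤ m → m ≤ 4 → Q₁.eval (y m) = u m)
    (hQ₂ : ∀ m : ℕ, m ≤ 3 → Q₂.eval (y m) = u m) :
    ∀ x : ℝ,
      P.eval x =
        ((x - y 0) * (x - y 1) / (20 * h ^ 2)) * Q₀.eval x
          - ((x - y 0) * (x - y 5) / (10 * h ^ 2)) * Q₁.eval x
          + ((x - y 5) * (x - y 4) / (20 * h ^ 2)) * Q₂.eval x := by
  let Q : ℕ → ℝ[X]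
    | 0 => Q₂
    | 1 => Q₁
    | _ => Q₀
  have hQdeg : ∀ i ≤ 2, (Q i).degree ≤ 3 := by
    intro i hi
    interval_cases i <;> assumption
  have hQ : ∀ i ≤ 2, ∀ k ∈ Finset.Icc i (i + 3), (Q i).eval (y k) = u k := by
    intro i hi k hk
    obtain ⟨hik, hki⟩ := Finset.mem_Icc.mp hk
    interval_cases i
    exacts [hQ₂ k hki, hQ₁ k hik hki, hQ₀ k hik hki]
  have hPsum := fbmweno_optimal_polynomial_weights_general hy hh.ne' (n := 2) (m := 3)
    (by positivity) hPdeg hP hQdeg hQ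
  intro x
  rw [hPsum]
  simp only [Finset.Nat.sum_antidiagonal_eq_sum_range_succ_mk, Finset.sum_range_succ,
    Finset.prod_range_succ, Finset.sum_range_zero, Finset.prod_range_zero, eval_add, eval_mul,
    eval_zero, eval_substencilWeight]
  norm_num [Nat.descFactorial, Q]
  ring
end

section
/- Let h > 0, y₀ ∈ ℝ, and set y_m = y₀ + m·h for m = 0, 1, …, 5. Define C₀(x) = (x − y₀)(x − y₁)/(20h²), C₁(x) = −(x − y₀)(x − y₅)/(10h²) and C₂(x) = (x − y₅)(x − y₄)/(20h²). Then: (i) C₀(x) + C₁(x) + C₂(x) = 1 for all x ∈ ℝ; and (ii) for every x with y₂ < x < y₃, each of C₀(x), C₁(x), C₂(x) is strictly positive. -/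
/-!
Two steps of Neville's recursion, from the substencils that drop two nodes, build the big
interpolant: each step blends two neighbouring interpolants with coefficients `r` and `1 - r`, where
`r = (x - a) / (b - a)`. The resulting three weights therefore sum to one, and each of them splits
into linear factors that vanish at the four outer nodes. On six equispaced nodes these weights are
`C₀, C₁, C₂`, as one sees in the coordinate `t = (x - y₀) / h`, where the outer nodes are
`0, 1, 4, 5`.
-/

open Set

section NevilleWeights

variable {K : Type*} [Field K]

/-- The coefficient, in Neville's recursion over a stencil with end nodes `a` and `b`, of the
interpolant that omits `a`; the interpolant that omits `b` has coefficient
`1 - nevilleRatio a b x`. -/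
def nevilleRatio (a b x : K) : K := (x - a) / (b - a)

/-- The weight, after two steps of Neville's recursion on a stencil with nodes `a, b, …, c, d`, of
the interpolant that omits `a` and `b`. -/
def nevilleRightWeight (a b d x : K) : K := nevilleRatio a d x * nevilleRatio b d x

/-- The weight, after two steps of Neville's recursion on a stencil with nodes `a, b, …, c, d`, of
the interpolant that omits `a` and `d`. It has one term for each order of omitting them. -/
def nevilleMiddleWeight (a b c d x : K) : K :=
  nevilleRatio a d x * (1 - nevilleRatio b d x) + (1 - nevilleRatio a d x) * nevilleRatio a c x

/-- The weight, after two steps of Neville's recursion on a stencil with nodes `a, b, …, c, d`, of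
the interpolant that omits `c` and `d`. -/
def nevilleLeftWeight (a c d x : K) : K := (1 - nevilleRatio a d x) * (1 - nevilleRatio a c x)

theorem nevilleWeights_add_eq_one (a b c d x : K) :
    nevilleRightWeight a b d x + nevilleMiddleWeight a b c d x + nevilleLeftWeight a c d x = 1 := by
  simp only [nevilleRightWeight, nevilleMiddleWeight, nevilleLeftWeight]
  ring

theorem one_sub_nevilleRatio {a b : K} (hab : a ≠ b) (x : K) :
    1 - nevilleRatio a b x = (b - x) / (b - a) := by
  rw [nevilleRatio, one_sub_div (sub_ne_zero.mpr hab.symm), sub_sub_sub_cancel_right]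

theorem nevilleMiddleWeight_eq {a b c d : K} (hbd : b ≠ d) (had : a ≠ d) (x : K) :
    nevilleMiddleWeight a b c d x =
      (x - a) * (d - x) * ((1 / (d - b) + 1 / (c - a)) / (d - a)) := by
  rw [nevilleMiddleWeight, one_sub_nevilleRatio hbd, one_sub_nevilleRatio had, nevilleRatio,
    nevilleRatio]
  ring

variable [LinearOrder K] [IsStrictOrderedRing K] {a b c d x : K}

theorem nevilleRatio_pos_iff (hab : a < b) : 0 < nevilleRatio a b x ↔ a < x := by
  rw [nevilleRatio, div_pos_iff_of_pos_right (sub_pos.mpr hab), sub_pos]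

theorem one_sub_nevilleRatio_pos_iff (hab : a < b) : 0 < 1 - nevilleRatio a b x ↔ x < b := by
  rw [one_sub_nevilleRatio hab.ne, div_pos_iff_of_pos_right (sub_pos.mpr hab), sub_pos]

theorem nevilleMiddleWeight_pos_iff (hac : a < c) (hbd : b < d) (had : a < d) :
    0 < nevilleMiddleWeight a b c d x ↔ a < x ∧ x < d := by
  have scale_pos : 0 < (1 / (d - b) + 1 / (c - a)) / (d - a) := by
    have := sub_pos.mpr hac
    have := sub_pos.mpr hbd
    have := sub_pos.mpr had
    positivity
  rw [nevilleMiddleWeight_eq hbd.ne had.ne, mul_pos_iff_of_pos_right scale_pos]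
  constructor
  · intro hprod
    rcases pos_and_pos_or_neg_and_neg_of_mul_pos hprod with ⟨hax, hxd⟩ | ⟨hxa, hdx⟩
    · exact ⟨sub_pos.mp hax, sub_pos.mp hxd⟩
    · exact absurd ((sub_neg.mp hdx).trans (sub_neg.mp hxa)) had.not_gt
  · rintro ⟨hax, hxd⟩
    exact mul_pos (sub_pos.mpr hax) (sub_pos.mpr hxd)

theorem nevilleWeights_pos_iff (hab : a < b) (hac : a < c) (hbd : b < d) (hcd : c < d) :
    (0 < nevilleRightWeight a b d x ∧ 0 < nevilleMiddleWeight a b c d x ∧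
      0 < nevilleLeftWeight a c d x) ↔ x ∈ Ioo b c := by
  have had : a < d := hab.trans hbd
  have right_pos_iff (hax : a < x) : 0 < nevilleRightWeight a b d x ↔ b < x := by
    rw [nevilleRightWeight, mul_pos_iff_of_pos_left ((nevilleRatio_pos_iff had).mpr hax),
      nevilleRatio_pos_iff hbd]
  have left_pos_iff (hxd : x < d) : 0 < nevilleLeftWeight a c d x ↔ x < c := by
    rw [nevilleLeftWeight, mul_pos_iff_of_pos_left ((one_sub_nevilleRatio_pos_iff had).mpr hxd),
      one_sub_nevilleRatio_pos_iff hac]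
  rw [nevilleMiddleWeight_pos_iff hac hbd had]
  constructor
  · rintro ⟨hright, ⟨hax, hxd⟩, hleft⟩
    exact ⟨(right_pos_iff hax).mp hright, (left_pos_iff hxd).mp hleft⟩
  · rintro ⟨hbx, hxc⟩
    have hax := hab.trans hbx
    have hxd := hxc.trans hcd
    exact ⟨(right_pos_iff hax).mpr hbx, ⟨hax, hxd⟩, (left_pos_iff hxd).mpr hxc⟩

end NevilleWeights

section Equispaced

variable {K : Type*} [Field K] [LinearOrder K] [IsStrictOrderedRing K] {h : K}

theorem strictMono_of_equispaced {y₀ : K} {y : ℕ → K} (hh : 0 < h)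
    (hy : ∀ m : ℕ, y m = y₀ + (m : K) * h) : StrictMono y := by
  intro i j hij
  rw [hy, hy]
  gcongr

theorem sub_div_mem_uIoo_iff (hh : h ≠ 0) {y₀ a b x : K} :
    (x - y₀) / h ∈ uIoo a b ↔ x ∈ uIoo (y₀ + a * h) (y₀ + b * h) := by
  simp only [uIoo_eq_union, mem_union, mem_Ioo, ← lt_sub_iff_add_lt', ← sub_lt_iff_lt_add']
  rcases hh.lt_or_gt with hneg | hpos
  · simp only [lt_div_iff_of_neg hneg, div_lt_iff_of_neg hneg]
    tauto
  · simp only [lt_div_iff₀ hpos, div_lt_iff₀ hpos]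

theorem nevilleRightWeight_equispaced (hh : h ≠ 0) (y₀ x : K) :
    nevilleRightWeight 0 1 5 ((x - y₀) / h) = (x - y₀) * (x - (y₀ + h)) / (20 * h ^ 2) := by
  simp only [nevilleRightWeight, nevilleRatio]
  field

theorem nevilleMiddleWeight_equispaced (hh : h ≠ 0) (y₀ x : K) :
    nevilleMiddleWeight 0 1 4 5 ((x - y₀) / h) =
      -((x - y₀) * (x - (y₀ + 5 * h))) / (10 * h ^ 2) := by
  rw [nevilleMiddleWeight_eq (by norm_num) (by norm_num)]
  field

theorem nevilleLeftWeight_equispaced (hh : h ≠ 0) (y₀ x : K) :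
    nevilleLeftWeight 0 4 5 ((x - y₀) / h) =
      (x - (y₀ + 5 * h)) * (x - (y₀ + 4 * h)) / (20 * h ^ 2) := by
  simp only [nevilleLeftWeight, nevilleRatio]
  field

theorem fbmweno_weights_partition_of_unity_and_positivity_general
    (hh : h ≠ 0) (y₀ : K) (y : ℕ → K) (hy : ∀ m : ℕ, y m = y₀ + (m : K) * h)
    (C₀ C₁ C₂ : K → K)
    (hC₀ : ∀ x : K, C₀ x = (x - y 0) * (x - y 1) / (20 * h ^ 2))
    (hC₁ : ∀ x : K, C₁ x = -((x - y 0) * (x - y 5)) / (10 * h ^ 2))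
    (hC₂ : ∀ x : K, C₂ x = (x - y 5) * (x - y 4) / (20 * h ^ 2)) :
    (∀ x : K, C₀ x + C₁ x + C₂ x = 1) ∧
    (∀ x : K, (0 < C₀ x ∧ 0 < C₁ x ∧ 0 < C₂ x) ↔ x ∈ uIoo (y 1) (y 4)) := by
  simp only [hy, Nat.cast_zero, Nat.cast_one, Nat.cast_ofNat, zero_mul, one_mul, add_zero]
    at hC₀ hC₁ hC₂ ⊢
  simp only [hC₀, hC₁, hC₂, ← nevilleRightWeight_equispaced hh,
    ← nevilleMiddleWeight_equispaced hh, ← nevilleLeftWeight_equispaced hh]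
  refine ⟨fun x => nevilleWeights_add_eq_one 0 1 4 5 _, fun x => ?_⟩
  have one_lt_four : (1 : K) < 4 := by norm_num
  rw [nevilleWeights_pos_iff (by norm_num) (by norm_num) (by norm_num) (by norm_num),
    ← uIoo_of_lt one_lt_four, sub_div_mem_uIoo_iff hh, one_mul]

end Equispaced

/-- The FBMWENO optimal-weight polynomials `C₀, C₁, C₂` form a partition of
unity, and they are strictly positive on the central cell `(y₂, y₃)`. -/
theorem fbmweno_weights_partition_of_unity_and_positivity
    (h : ℝ) (hh : 0 < h) (y₀ : ℝ)
    (y : ℕ → ℝ) (hy : ∀ m : ℕ, y m = y₀ + (m : ℝ) * h)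
    (C₀ C₁ C₂ : ℝ → ℝ)
    (hC₀ : ∀ x : ℝ, C₀ x = (x - y 0) * (x - y 1) / (20 * h ^ 2))
    (hC₁ : ∀ x : ℝ, C₁ x = -((x - y 0) * (x - y 5)) / (10 * h ^ 2))
    (hC₂ : ∀ x : ℝ, C₂ x = (x - y 5) * (x - y 4) / (20 * h ^ 2)) :
    (∀ x : ℝ, C₀ x + C₁ x + C₂ x = 1) ∧
    (∀ x : ℝ, y 2 < x → x < y 3 → 0 < C₀ x ∧ 0 < C₁ x ∧ 0 < C₂ x) := by
  obtain ⟨hsum, hpos⟩ := fbmweno_weights_partition_of_unity_and_positivity_general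
    hh.ne' y₀ y hy C₀ C₁ C₂ hC₀ hC₁ hC₂
  have hmono := strictMono_of_equispaced hh hy
  exact ⟨hsum, fun x h2x hx3 => (hpos x).mpr <|
    mem_uIoo_of_lt ((hmono (by norm_num)).trans h2x) (hx3.trans (hmono (by norm_num)))⟩
end

section
/- Let V be a real vector space and N a seminorm on V. Let H : ℝ × V → V, let Δt > 0 and t₀ ∈ ℝ, and assume the forward-Euler contraction property N(u + Δt·H(t, u)) ≤ N(u) for every t ∈ ℝ and u ∈ V. Define the third-order TVD Runge–Kutta stages f¹ := f⁰ + Δt·H(t₀, f⁰), f² := (3/4)·f⁰ + (1/4)·f¹ + (1/4)·Δt·H(t₀ + Δt, f¹), and f³ := (1/3)·f⁰ + (2/3)·f² + (2/3)·Δt·H(t₀ + Δt/2, f²). Then N(f³) ≤ N(f⁰). -/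
theorem smul_add_smul_add_mul_smul_mem_of_convex {𝕜 V : Type*} [Semiring 𝕜] [PartialOrder 𝕜]
    [AddCommMonoid V] [Module 𝕜 V] {s : Set V} (hs : Convex 𝕜 s) {a b τ : 𝕜}
    (ha : 0 ≤ a) (hb : 0 ≤ b) (hab : a + b = 1) {u v w : V}
    (hu : u ∈ s) (hv : v + τ • w ∈ s) :
    a • u + b • v + (b * τ) • w ∈ s := by
  have shu_osher_form : a • u + b • v + (b * τ) • w = a • u + b • (v + τ • w) := by
    rw [smul_add, smul_smul, add_assoc]
  rw [shu_osher_form]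
  exact hs hu hv ha hb hab

/-- Each stage is a convex combination of `f0` and a forward-Euler step from the previous stage,
so it stays in the convex sublevel set `{u | φ u ≤ φ f0}`. -/
theorem tvd_rk3_seminorm_nonincreasing_general {𝕜 V β : Type*} [Semifield 𝕜] [LinearOrder 𝕜]
    [IsStrictOrderedRing 𝕜] [AddCommMonoid V] [Module 𝕜 V] [Preorder β] {φ : V → β}
    (hφ : QuasiconvexOn 𝕜 Set.univ φ) {H : 𝕜 → V → V} {Δt t₀ : 𝕜}
    (hFE : ∀ (t : 𝕜) (u : V), φ (u + Δt • H t u) ≤ φ u)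
    {f0 f1 f2 f3 : V}
    (hf1 : f1 = f0 + Δt • H t₀ f0)
    (hf2 : f2 = (3 / 4 : 𝕜) • f0 + (1 / 4 : 𝕜) • f1
        + ((1 / 4 : 𝕜) * Δt) • H (t₀ + Δt) f1)
    (hf3 : f3 = (1 / 3 : 𝕜) • f0 + (2 / 3 : 𝕜) • f2
        + ((2 / 3 : 𝕜) * Δt) • H (t₀ + Δt / 2) f2) :
    φ f3 ≤ φ f0 := by
  have convex_sublevel : Convex 𝕜 {u | φ u ≤ φ f0} := by
    simpa only [Set.mem_univ, true_and] using hφ (φ f0)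
  have f1_le : φ f1 ≤ φ f0 := hf1 ▸ hFE t₀ f0
  have f2_le : φ f2 ≤ φ f0 := hf2 ▸
    smul_add_smul_add_mul_smul_mem_of_convex convex_sublevel (by positivity) (by positivity)
      (by norm_num) le_rfl ((hFE _ f1).trans f1_le)
  exact hf3 ▸
    smul_add_smul_add_mul_smul_mem_of_convex convex_sublevel (by positivity) (by positivity)
      (by norm_num) le_rfl ((hFE _ f2).trans f2_le)

/-- The third-order TVD Runge–Kutta scheme does not increase any seminorm that
is not increased by a single forward-Euler step. -/
theorem tvd_rk3_seminorm_nonincreasing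
    (V : Type*) [AddCommGroup V] [Module ℝ V] (N : Seminorm ℝ V)
    (H : ℝ → V → V) (Δt : ℝ) (hΔt : 0 < Δt) (t₀ : ℝ)
    (hFE : ∀ (t : ℝ) (u : V), N (u + Δt • H t u) ≤ N u)
    (f0 f1 f2 f3 : V)
    (hf1 : f1 = f0 + Δt • H t₀ f0)
    (hf2 : f2 = (3/4 : ℝ) • f0 + (1/4 : ℝ) • f1
        + ((1/4 : ℝ) * Δt) • H (t₀ + Δt) f1)
    (hf3 : f3 = (1/3 : ℝ) • f0 + (2/3 : ℝ) • f2
        + ((2/3 : ℝ) * Δt) • H (t₀ + Δt / 2) f2) :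
    N f3 ≤ N f0 :=
  tvd_rk3_seminorm_nonincreasing_general N.convexOn.quasiconvexOn hFE hf1 hf2 hf3
end
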